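/- Let (G, I, λ) be an interval discounted sum game where λ ∈ (0, 1) and I ⊆ ℝ is an interval with nonempty interior (a non-singleton interval). If Eve has a winning strategy (a strategy ensuring DS_λ(π) ∈ I for every consistent play π) then she has a finite-memory winning strategy, i.e., a winning strategy computed by a finite-state machine. -/

import Mathlib

/-!
The set of discounted sums of the plays extending a given history of `N` edges has diameter
`O(λ^N)`. Since `I` contains a nondegenerate segment, for `N` large such a set cannot stick out
of `I` on both sides (`exists_depth`). So once `N` edges have been played only one endpoint of `I`
matters, and Eve's objective becomes either "make the sum as large as possible" or "make it as
small as possible". For each of these two objectives there is a positional optimal choice, read off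
the fixed point of the Shapley operator (`exists_value`), which exists by Banach's theorem.

The finite-memory strategy remembers the history up to `N` edges, plays the given winning strategy
`σ` meanwhile, and afterwards plays positionally, maximising or minimising according to the
remembered history. To see that a play `π` of this strategy is winning, compare it with the play
that shares the first `N + 1` edges with `π` and then opposes `σ` to the optimal positional choice
of Adam: the latter is winning, and by optimality the discounted sum of `π` is on the right side
of it.
-/


open Filter

/-- A game graph: vertex set `V`, Eve's vertices `Eve`, edge relation `E` (every vertex
has a successor), integer weight function `w`, and initial vertex `init`. -/
structure GameGraph (V : Type) where
  Eve : Set V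
  E : V → V → Prop
  w : V → V → ℤ
  init : V
  succ : ∀ v, ∃ u, E v u

namespace GameGraph

variable {V : Type}

/-- `π` is a play starting at vertex `v`. -/
def IsPlayFrom (G : GameGraph V) (v : V) (π : ℕ → V) : Prop :=
  π 0 = v ∧ ∀ i, G.E (π i) (π (i + 1))

/-- `π` is a play (from the initial vertex). -/
def IsPlay (G : GameGraph V) (π : ℕ → V) : Prop :=
  G.IsPlayFrom G.init π

/-- The prefix `π 0, …, π i` of a play, as a list. -/
def prefixList (π : ℕ → V) (i : ℕ) : List V :=
  List.ofFn (fun j : Fin (i + 1) => π j)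

/-- A (history-based) strategy for Eve is legal if it always proposes a successor
of the current (Eve) vertex. -/
def EveLegal (G : GameGraph V) (σ : List V → V) : Prop :=
  ∀ (l : List V) (v : V), v ∈ G.Eve → G.E v (σ (l ++ [v]))

/-- A (history-based) strategy for Adam is legal if it always proposes a successor
of the current (Adam) vertex. -/
def AdamLegal (G : GameGraph V) (σ : List V → V) : Prop :=
  ∀ (l : List V) (v : V), v ∉ G.Eve → G.E v (σ (l ++ [v]))

/-- The play `π` is consistent with Eve's strategy `σ`. -/
def ConsEve (G : GameGraph V) (σ : List V → V) (π : ℕ → V) : Prop :=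
  ∀ i, π i ∈ G.Eve → π (i + 1) = σ (prefixList π i)

/-- The play `π` is consistent with Adam's strategy `σ`. -/
def ConsAdam (G : GameGraph V) (σ : List V → V) (π : ℕ → V) : Prop :=
  ∀ i, π i ∉ G.Eve → π (i + 1) = σ (prefixList π i)

/-- Eve has a winning strategy for the objective `Win`. -/
def EveWins (G : GameGraph V) (Win : (ℕ → V) → Prop) : Prop :=
  ∃ σ : List V → V, G.EveLegal σ ∧ ∀ π, G.IsPlay π → G.ConsEve σ π → Win π

/-- Adam has a winning strategy: he can ensure the objective `Win` of Eve fails. -/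
def AdamWins (G : GameGraph V) (Win : (ℕ → V) → Prop) : Prop :=
  ∃ σ : List V → V, G.AdamLegal σ ∧ ∀ π, G.IsPlay π → G.ConsAdam σ π → ¬ Win π

/-- Consistency with a positional Eve strategy. -/
def ConsEvePos (G : GameGraph V) (f : V → V) (π : ℕ → V) : Prop :=
  ∀ i, π i ∈ G.Eve → π (i + 1) = f (π i)

/-- Consistency with a positional Adam strategy. -/
def ConsAdamPos (G : GameGraph V) (f : V → V) (π : ℕ → V) : Prop :=
  ∀ i, π i ∉ G.Eve → π (i + 1) = f (π i)

/-- Eve has a positional (memoryless) winning strategy. -/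
def EveWinsPos (G : GameGraph V) (Win : (ℕ → V) → Prop) : Prop :=
  ∃ f : V → V, (∀ v ∈ G.Eve, G.E v (f v)) ∧
    ∀ π, G.IsPlay π → G.ConsEvePos f π → Win π

/-- Adam has a positional (memoryless) winning strategy. -/
def AdamWinsPos (G : GameGraph V) (Win : (ℕ → V) → Prop) : Prop :=
  ∃ f : V → V, (∀ v, v ∉ G.Eve → G.E v (f v)) ∧
    ∀ π, G.IsPlay π → G.ConsAdamPos f π → ¬ Win π

/-- The run of the memory structure `(δ, m)` of a finite-state machine while
reading the play `π`: after `i` steps it has read `π 0, …, π (i-1)`. -/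
def memRun {M : Type} (δ : M → V → M) (m : M) (π : ℕ → V) : ℕ → M
  | 0 => m
  | i + 1 => δ (memRun δ m π i) (π i)

/-- Consistency of a play with the finite-memory strategy given by the machine
`(m0, δ, o)`: at step `i`, the machine has memory `memRun δ m0 π i` (having read
`π 0, …, π (i-1)`) and outputs the move `o (memRun δ m0 π i) (π i)`. -/
def ConsEveFM (G : GameGraph V) {M : Type} (m0 : M) (δ : M → V → M)
    (o : M → V → V) (π : ℕ → V) : Prop :=
  ∀ i, π i ∈ G.Eve → π (i + 1) = o (memRun δ m0 π i) (π i)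

/-- Eve has a finite-memory winning strategy, i.e. one computed by a
finite-state machine. -/
def EveWinsFM (G : GameGraph V) (Win : (ℕ → V) → Prop) : Prop :=
  ∃ (M : Type) (_ : Fintype M) (m0 : M) (δ : M → V → M) (o : M → V → V),
    (∀ m, ∀ v ∈ G.Eve, G.E v (o m v)) ∧
    ∀ π, G.IsPlay π → G.ConsEveFM m0 δ o π → Win π

/-- The total weight `w(π[..k])` of the length-`k` prefix of a play. -/
def partialSum (G : GameGraph V) (π : ℕ → V) (k : ℕ) : ℤ :=
  ∑ i ∈ Finset.range k, G.w (π i) (π (i + 1))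

/-- The (liminf) mean-payoff of a play. -/
noncomputable def MP (G : GameGraph V) (π : ℕ → V) : ℝ :=
  liminf (fun k => (G.partialSum π k : ℝ) / (k : ℝ)) atTop

/-- The liminf payoff of a play, in the extended reals. -/
noncomputable def liminfPayoff (G : GameGraph V) (π : ℕ → V) : EReal :=
  liminf (fun i => ((G.w (π i) (π (i + 1)) : ℝ) : EReal)) atTop

/-- The total-sum payoff of a play, in the extended reals. -/
noncomputable def totalPayoff (G : GameGraph V) (π : ℕ → V) : EReal :=
  liminf (fun k => ((G.partialSum π k : ℝ) : EReal)) atTop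

/-- The discounted sum of a play, with discount factor `lam`. -/
noncomputable def DS (G : GameGraph V) (lam : ℝ) (π : ℕ → V) : ℝ :=
  ∑' i : ℕ, lam ^ i * (G.w (π i) (π (i + 1)) : ℝ)

/-- A play of a (min-)parity game is winning for Eve iff the minimal priority
occurring infinitely often is even. -/
def ParityWin (Ω : V → ℕ) (π : ℕ → V) : Prop :=
  ∃ p, Even p ∧ (∀ N, ∃ k, N ≤ k ∧ Ω (π k) = p) ∧
    ∀ q, (∀ N, ∃ k, N ≤ k ∧ Ω (π k) = q) → p ≤ q

end GameGraph

namespace GameGraph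

variable {V : Type}

/-! ### Plays generated by history-dependent choices -/

lemma prefixList_succ (π : ℕ → V) (i : ℕ) :
    prefixList π (i + 1) = prefixList π i ++ [π (i + 1)] := by
  unfold prefixList
  rw [List.ofFn_succ', List.concat_eq_append]
  simp

lemma length_prefixList (π : ℕ → V) (i : ℕ) : (prefixList π i).length = i + 1 := by
  simp [prefixList]

lemma eq_of_prefixList_eq {π ρ : ℕ → V} {N : ℕ} (h : prefixList π N = prefixList ρ N)
    {i : ℕ} (hi : i ≤ N) : π i = ρ i := by
  have := congrFun (List.ofFn_injective h) ⟨i, by omega⟩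
  simpa using this

lemma prefixList_congr {π ρ : ℕ → V} {N : ℕ} (h : ∀ i ≤ N, π i = ρ i) :
    prefixList π N = prefixList ρ N := by
  unfold prefixList
  congr 1
  funext j
  exact h j (by omega)

/-- `prefixList π i` splits off its last vertex, which is the form in which legality of a
strategy is stated. -/
lemma exists_prefixList_eq (π : ℕ → V) (i : ℕ) : ∃ l, prefixList π i = l ++ [π i] := by
  cases i with
  | zero => exact ⟨[], by simp [prefixList]⟩
  | succ i => exact ⟨_, prefixList_succ π i⟩

lemma exists_generated (v : V) (τ : ℕ → V → List V → V) :
    ∃ π : ℕ → V, π 0 = v ∧ ∀ i, π (i + 1) = τ i (π i) (prefixList π i) := by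
  -- The recursion carries the current vertex together with the history ending in it.
  let s : ℕ → V × List V := fun n => Nat.rec (v, [v])
    (fun i p => (τ i p.1 p.2, p.2 ++ [τ i p.1 p.2])) n
  have hs : ∀ n, prefixList (fun i => (s i).1) n = (s n).2 := by
    intro n
    induction n with
    | zero => simp [prefixList, s]
    | succ n ih => rw [prefixList_succ, ih]
  refine ⟨fun i => (s i).1, rfl, fun i => ?_⟩
  rw [hs]

/-! ### Discounted sums and potentials -/

lemma summable_discounted {lam : ℝ} (h0 : 0 < lam) (h1 : lam < 1) {r : ℕ → ℝ} {B : ℝ}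
    (hr : ∀ i, |r i| ≤ B) : Summable fun i => lam ^ i * r i := by
  refine Summable.of_norm_bounded
    (g := fun i => lam ^ i * B) ((summable_geometric_of_lt_one h0.le h1).mul_right B) ?_
  intro i
  rw [Real.norm_eq_abs, abs_mul, abs_of_pos (pow_pos h0 i)]
  exact mul_le_mul_of_nonneg_left (hr i) (pow_pos h0 i).le

/-- A bounded potential `x` that is dominated by one step of the play from time `K` on bounds the
discounted sum from below: the partial sums corrected by `λ ^ n * x n` are monotone for `n ≥ K`. -/
lemma le_tsum_of_potential {lam : ℝ} (h0 : 0 < lam) (h1 : lam < 1) {r x : ℕ → ℝ} {B C : ℝ}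
    (hr : ∀ i, |r i| ≤ B) (hx : ∀ i, |x i| ≤ C) (K : ℕ)
    (h : ∀ i, K ≤ i → x i ≤ r i + lam * x (i + 1)) :
    ∑ i ∈ Finset.range K, lam ^ i * r i + lam ^ K * x K ≤ ∑' i, lam ^ i * r i := by
  have hsum := (summable_discounted h0 h1 hr).hasSum.tendsto_sum_nat
  have hxs := (summable_discounted h0 h1 hx).tendsto_atTop_zero
  have hlim := hsum.add hxs
  rw [add_zero] at hlim
  refine ge_of_tendsto hlim ?_
  filter_upwards [eventually_ge_atTop K] with n hn
  induction n, hn using Nat.le_induction with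
  | base => exact le_rfl
  | succ n hn ih =>
    refine ih.trans ?_
    rw [Finset.sum_range_succ, pow_succ]
    have := mul_le_mul_of_nonneg_left (h n hn) (pow_pos h0 n).le
    nlinarith

lemma tsum_le_of_potential {lam : ℝ} (h0 : 0 < lam) (h1 : lam < 1) {r x : ℕ → ℝ} {B C : ℝ}
    (hr : ∀ i, |r i| ≤ B) (hx : ∀ i, |x i| ≤ C) (K : ℕ)
    (h : ∀ i, K ≤ i → r i + lam * x (i + 1) ≤ x i) :
    ∑' i, lam ^ i * r i ≤ ∑ i ∈ Finset.range K, lam ^ i * r i + lam ^ K * x K := by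
  have := le_tsum_of_potential h0 h1 (r := fun i => - r i) (x := fun i => - x i)
    (B := B) (C := C) (by simpa using hr) (by simpa using hx) K
    (fun i hi => by have := h i hi; linarith)
  simp only [mul_neg, Finset.sum_neg_distrib, tsum_neg] at this
  linarith

/-! ### Optimal positional choices -/

/-- Values and optimal positional choices of the discounted game in which the owner of `A`
maximises and the opponent minimises. The value function is the fixed point of the Shapley
operator, a `λ`-contraction for the sup norm; `f` picks an optimal successor for both players. -/
lemma exists_value [Fintype V] (G : GameGraph V) {lam : ℝ} (h0 : 0 < lam) (h1 : lam < 1)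
    (A : Set V) :
    ∃ (val : V → ℝ) (f : V → V), (∀ v, G.E v (f v)) ∧
      (∀ v, val v = G.w v (f v) + lam * val (f v)) ∧
      (∀ v ∈ A, ∀ u, G.E v u → G.w v u + lam * val u ≤ val v) ∧
      (∀ v, v ∉ A → ∀ u, G.E v u → val v ≤ G.w v u + lam * val u) := by
  classical
  let S : V → Finset V := fun v => Finset.univ.filter (G.E v)
  have hS : ∀ v, (S v).Nonempty := fun v => by
    obtain ⟨u, hu⟩ := G.succ v
    exact ⟨u, by simp [S, hu]⟩
  let q : (V → ℝ) → V → V → ℝ := fun x v u => G.w v u + lam * x u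
  let T : (V → ℝ) → V → ℝ := fun x v =>
    if v ∈ A then (S v).sup' (hS v) (q x v) else (S v).inf' (hS v) (q x v)
  have hq : ∀ x y v u, q x v u ≤ q y v u + lam * dist x y := by
    intro x y v u
    have h2 : x u - y u ≤ dist x y :=
      (le_abs_self _).trans (by simpa [Real.dist_eq] using dist_le_pi_dist x y u)
    have := mul_le_mul_of_nonneg_left h2 h0.le
    simp only [q]
    linarith
  have hT : ∀ x y v, T x v ≤ T y v + lam * dist x y := by
    intro x y v
    by_cases hv : v ∈ A
    · simp only [T, if_pos hv]
      refine Finset.sup'_le _ _ fun u hu => (hq x y v u).trans ?_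
      have := Finset.le_sup' (q y v) hu
      linarith
    · simp only [T, if_neg hv]
      obtain ⟨u, hu, hu'⟩ := Finset.exists_mem_eq_inf' (hS v) (q y v)
      rw [hu']
      exact (Finset.inf'_le _ hu).trans (hq x y v u)
  have hc : ContractingWith ⟨lam, h0.le⟩ T := by
    refine ⟨by exact_mod_cast h1, LipschitzWith.of_dist_le_mul fun x y => ?_⟩
    change dist (T x) (T y) ≤ lam * dist x y
    refine (dist_pi_le_iff (by positivity)).2 fun v => ?_
    rw [Real.dist_eq, abs_le]
    have a := hT x y v
    have b := hT y x v
    rw [dist_comm y x] at b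
    constructor <;> linarith
  let val := ContractingWith.fixedPoint T hc
  have hfix : ∀ v, T val v = val v := fun v => congrFun hc.fixedPoint_isFixedPt v
  have hf : ∀ v, ∃ u, G.E v u ∧ val v = q val v u := by
    intro v
    by_cases hv : v ∈ A
    · obtain ⟨u, hu, hu'⟩ := Finset.exists_mem_eq_sup' (hS v) (q val v)
      refine ⟨u, by simpa [S] using hu, ?_⟩
      rw [← hfix, ← hu']
      simp only [T, if_pos hv]
    · obtain ⟨u, hu, hu'⟩ := Finset.exists_mem_eq_inf' (hS v) (q val v)
      refine ⟨u, by simpa [S] using hu, ?_⟩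
      rw [← hfix, ← hu']
      simp only [T, if_neg hv]
  choose f hf1 hf2 using hf
  refine ⟨val, f, hf1, hf2, fun v hv u hu => ?_, fun v hv u hu => ?_⟩
  · rw [← hfix v]
    simp only [T, if_pos hv]
    exact Finset.le_sup' (q val v) (by simp [S, hu])
  · rw [← hfix v]
    simp only [T, if_neg hv]
    exact Finset.inf'_le (q val v) (by simp [S, hu])

lemma exists_bound [Fintype V] (x : V → ℝ) : ∃ C, ∀ v, |x v| ≤ C := by
  obtain ⟨C, hC⟩ := (Set.finite_range fun v => |x v|).bddAbove
  exact ⟨C, fun v => hC ⟨v, rfl⟩⟩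

lemma exists_weight_bound [Fintype V] (G : GameGraph V) : ∃ B : ℝ, ∀ v u, |(G.w v u : ℝ)| ≤ B := by
  obtain ⟨B, hB⟩ := exists_bound fun p : V × V => (G.w p.1 p.2 : ℝ)
  exact ⟨B, fun v u => hB (v, u)⟩

/-- If `π` and `ρ` agree up to time `K` and from then on the owner of `A` plays optimally in `π`
while the opponent plays optimally in `ρ`, then the value at time `K` separates the two
discounted sums. -/
lemma DS_le_DS_of_optimal [Fintype V] (G : GameGraph V) {lam : ℝ} (h0 : 0 < lam) (h1 : lam < 1)
    {A : Set V} {val : V → ℝ} {f : V → V}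
    (hval : ∀ v, val v = G.w v (f v) + lam * val (f v))
    (hA : ∀ v ∈ A, ∀ u, G.E v u → G.w v u + lam * val u ≤ val v)
    (hA' : ∀ v, v ∉ A → ∀ u, G.E v u → val v ≤ G.w v u + lam * val u)
    {π ρ : ℕ → V} (hπ : ∀ i, G.E (π i) (π (i + 1))) (hρ : ∀ i, G.E (ρ i) (ρ (i + 1)))
    {K : ℕ} (hK : ∀ i ≤ K, π i = ρ i)
    (hπf : ∀ i, K ≤ i → π i ∈ A → π (i + 1) = f (π i))
    (hρf : ∀ i, K ≤ i → ρ i ∉ A → ρ (i + 1) = f (ρ i)) :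
    G.DS lam ρ ≤ G.DS lam π := by
  obtain ⟨B, hB⟩ := G.exists_weight_bound
  obtain ⟨C, hC⟩ := exists_bound val
  have a := le_tsum_of_potential h0 h1 (r := fun i => (G.w (π i) (π (i + 1)) : ℝ))
    (x := fun i => val (π i)) (fun i => hB _ _) (fun i => hC _) K (fun i hi => by
      by_cases h : π i ∈ A
      · simp only [hπf i hi h]; exact (hval _).le
      · exact hA' _ h _ (hπ i))
  have b := tsum_le_of_potential h0 h1 (r := fun i => (G.w (ρ i) (ρ (i + 1)) : ℝ))
    (x := fun i => val (ρ i)) (fun i => hB _ _) (fun i => hC _) K (fun i hi => by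
      by_cases h : ρ i ∈ A
      · exact hA _ h _ (hρ i)
      · simp only [hρf i hi h]; exact (hval _).ge)
  have e : ∑ i ∈ Finset.range K, lam ^ i * (G.w (ρ i) (ρ (i + 1)) : ℝ)
      = ∑ i ∈ Finset.range K, lam ^ i * (G.w (π i) (π (i + 1)) : ℝ) := by
    refine Finset.sum_congr rfl fun i hi => ?_
    have := Finset.mem_range.1 hi
    rw [hK i (by omega), hK (i + 1) (by omega)]
  have e' := hK K le_rfl
  simp only [e, ← e'] at b
  exact b.trans a

/-! ### Only one endpoint of the interval matters eventually -/

/-- The upper endpoint of `I` is irrelevant once the history `l` (of `N` edges) has been played: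
among vertex sequences extending `l`, increasing the discounted sum never leads out of `I`. -/
def UpAfter (G : GameGraph V) (lam : ℝ) (I : Set ℝ) (N : ℕ) (l : List V) : Prop :=
  ∀ π ρ : ℕ → V, prefixList π N = l → prefixList ρ N = l →
    G.DS lam ρ ∈ I → G.DS lam ρ ≤ G.DS lam π → G.DS lam π ∈ I

/-- The lower endpoint of `I` is irrelevant once the history `l` (of `N` edges) has been
played: among vertex sequences extending `l`, decreasing the discounted sum never leads out of
`I`. -/
def DownAfter (G : GameGraph V) (lam : ℝ) (I : Set ℝ) (N : ℕ) (l : List V) : Prop :=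
  ∀ π ρ : ℕ → V, prefixList π N = l → prefixList ρ N = l →
    G.DS lam ρ ∈ I → G.DS lam π ≤ G.DS lam ρ → G.DS lam π ∈ I

/-- The discounted sums of sequences with a common long prefix are close. -/
lemma exists_close [Fintype V] (G : GameGraph V) {lam : ℝ} (h0 : 0 < lam) (h1 : lam < 1)
    {ε : ℝ} (hε : 0 < ε) :
    ∃ N, ∀ π ρ : ℕ → V, prefixList π N = prefixList ρ N → G.DS lam π - G.DS lam ρ < ε := by
  obtain ⟨B, hB⟩ := G.exists_weight_bound
  -- The constant potentials `± C` are those of the extreme constant weights `± B`.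
  let C := B / (1 - lam)
  have hC : B + lam * C = C := by
    have : 1 - lam ≠ 0 := by linarith
    simp only [C]
    field_simp
    ring
  have hlim : Tendsto (fun n => lam ^ n * (2 * C)) atTop (nhds 0) := by
    simpa using (tendsto_pow_atTop_nhds_zero_of_lt_one h0.le h1).mul_const (2 * C)
  obtain ⟨N, hN⟩ := (hlim.eventually (gt_mem_nhds hε)).exists
  refine ⟨N, fun π ρ h => ?_⟩
  have a := le_tsum_of_potential h0 h1 (r := fun i => (G.w (ρ i) (ρ (i + 1)) : ℝ))
    (x := fun _ => -C) (C := |C|) (fun i => hB _ _) (fun i => by simp) N (fun i hi => by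
      have := (abs_le.1 (hB (ρ i) (ρ (i + 1)))).1
      linarith)
  have b := tsum_le_of_potential h0 h1 (r := fun i => (G.w (π i) (π (i + 1)) : ℝ))
    (x := fun _ => C) (C := |C|) (fun i => hB _ _) (fun i => le_rfl) N (fun i hi => by
      have := (abs_le.1 (hB (π i) (π (i + 1)))).2
      linarith)
  have e : ∑ i ∈ Finset.range N, lam ^ i * (G.w (ρ i) (ρ (i + 1)) : ℝ)
      = ∑ i ∈ Finset.range N, lam ^ i * (G.w (π i) (π (i + 1)) : ℝ) := by
    refine Finset.sum_congr rfl fun i hi => ?_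
    have := Finset.mem_range.1 hi
    rw [eq_of_prefixList_eq h (i := i) (by omega), eq_of_prefixList_eq h (i := i + 1) (by omega)]
  rw [e] at a
  unfold DS
  linarith

lemma exists_depth [Fintype V] (G : GameGraph V) {lam : ℝ} (h0 : 0 < lam) (h1 : lam < 1)
    {I : Set ℝ} (hconn : I.OrdConnected) (hint : (interior I).Nonempty) :
    ∃ N, ∀ l, G.UpAfter lam I N l ∨ G.DownAfter lam I N l := by
  obtain ⟨c, hc⟩ := hint
  obtain ⟨ε, hε, hball⟩ := Metric.mem_nhds_iff.1 (mem_interior_iff_mem_nhds.1 hc)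
  have hc0 : c ∈ I := interior_subset hc
  have hc1 : c + ε / 2 ∈ I := hball (by
    rw [Metric.mem_ball, Real.dist_eq, add_sub_cancel_left, abs_of_pos] <;> linarith)
  obtain ⟨N, hN⟩ := G.exists_close h0 h1 (half_pos hε)
  refine ⟨N, fun l => ?_⟩
  by_contra hcon
  rw [not_or] at hcon
  obtain ⟨hup, hdown⟩ := hcon
  unfold UpAfter at hup
  unfold DownAfter at hdown
  push Not at hup hdown
  obtain ⟨π, ρ, hπ, hρ, hρI, hle, hπI⟩ := hup
  obtain ⟨π', ρ', hπ', hρ', hρI', hle', hπI'⟩ := hdown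
  -- `π` lies above `I` and `π'` below it, but both are too close for `[c, c + ε/2]` to fit between.
  have hlow : G.DS lam π' < c := by
    by_contra hge
    exact hπI' (hconn.out hc0 hρI' ⟨not_lt.1 hge, hle'⟩)
  have hhigh : c + ε / 2 < G.DS lam π := by
    by_contra hge
    exact hπI (hconn.out hρI hc1 ⟨hle, not_lt.1 hge⟩)
  have := hN π π' (hπ.trans hπ'.symm)
  linarith

/-! ### The finite-memory strategy -/

/-- Deviation from a winning strategy: if `π` is consistent with `σ` before time `K`, it can be
continued from time `K` on by `σ` for Eve and by `f` for Adam. -/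
lemma exists_deviation (G : GameGraph V) {σ : List V → V} (hσ : G.EveLegal σ)
    {f : V → V} (hf : ∀ v, G.E v (f v)) {π : ℕ → V} (hπ : G.IsPlay π) {K : ℕ}
    (hcons : ∀ i < K, π i ∈ G.Eve → π (i + 1) = σ (prefixList π i)) :
    ∃ ρ, G.IsPlay ρ ∧ G.ConsEve σ ρ ∧ (∀ i ≤ K, π i = ρ i) ∧
      ∀ i, K ≤ i → ρ i ∉ G.Eve → ρ (i + 1) = f (ρ i) := by
  classical
  obtain ⟨ρ, hρ0, hρ⟩ := exists_generated (π 0)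
    (fun i v l => if i < K then π (i + 1) else if v ∈ G.Eve then σ l else f v)
  have hag : ∀ i ≤ K, π i = ρ i := by
    intro i hi
    cases i with
    | zero => exact hρ0.symm
    | succ i => rw [hρ i, if_pos (by omega)]
  refine ⟨ρ, ⟨hρ0.trans hπ.1, fun i => ?_⟩, fun i hi => ?_, hag, fun i hi hv => ?_⟩
  · by_cases h : i < K
    · rw [← hag i h.le, ← hag (i + 1) h]
      exact hπ.2 i
    · rw [hρ i, if_neg h]
      split_ifs with hv
      · obtain ⟨l, hl⟩ := exists_prefixList_eq ρ i
        rw [hl]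
        exact hσ l _ hv
      · exact hf _
  · by_cases h : i < K
    · rw [← hag (i + 1) h, hcons i h (by rw [hag i h.le]; exact hi),
        prefixList_congr fun j hj => hag j (hj.trans h.le)]
    · rw [hρ i, if_neg h, if_pos hi]
  · rw [hρ i, if_neg (by omega), if_neg hv]

/-- Memory update that records the history until it has `N + 1` vertices and then freezes it. -/
def recordUpTo (N : ℕ) (l : {l : List V // l.length ≤ N + 1}) (v : V) :
    {l : List V // l.length ≤ N + 1} :=
  if h : l.1.length ≤ N then ⟨l.1 ++ [v], by simpa using h⟩ else l

lemma memRun_recordUpTo_le (N : ℕ) (π : ℕ → V) (i : ℕ) (hi : i ≤ N) :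
    (memRun (recordUpTo N) ⟨[], by simp⟩ π i).1.length = i ∧
    (memRun (recordUpTo N) ⟨[], by simp⟩ π i).1 ++ [π i] = prefixList π i := by
  induction i with
  | zero => simp [memRun, prefixList]
  | succ i ih =>
    obtain ⟨ih1, ih2⟩ := ih (by omega)
    have e : (memRun (recordUpTo N) ⟨[], by simp⟩ π (i + 1)).1 = prefixList π i := by
      rw [← ih2, memRun, recordUpTo, dif_pos (by omega)]
    rw [e]
    exact ⟨length_prefixList π i, (prefixList_succ π i).symm⟩

lemma memRun_recordUpTo_ge (N : ℕ) (π : ℕ → V) (i : ℕ) (hi : N + 1 ≤ i) :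
    (memRun (recordUpTo N) ⟨[], by simp⟩ π i).1 = prefixList π N := by
  induction i, hi using Nat.le_induction with
  | base =>
    obtain ⟨h1, h2⟩ := memRun_recordUpTo_le N π N le_rfl
    rw [← h2, memRun, recordUpTo, dif_pos (by omega)]
  | succ i hi ih =>
    rw [memRun, recordUpTo, dif_neg (by rw [ih, length_prefixList]; omega), ih]

end GameGraph

open GameGraph in
/-- In an interval discounted sum game `(G, I, λ)` with
`λ ∈ (0, 1)` and `I` an interval with nonempty interior (a non-singleton interval),
if Eve has a winning strategy (ensuring `DS_λ(π) ∈ I` for every consistent play),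
then she has a finite-memory winning strategy. -/
theorem stmt12 {V : Type} [Fintype V] (G : GameGraph V) (lam : ℝ)
    (h0 : 0 < lam) (h1 : lam < 1)
    (I : Set ℝ) (hconn : I.OrdConnected) (hint : (interior I).Nonempty) :
    G.EveWins (fun π => G.DS lam π ∈ I) → G.EveWinsFM (fun π => G.DS lam π ∈ I) := by
  classical
  rintro ⟨σ, hσ, hwin⟩
  obtain ⟨N, hN⟩ := G.exists_depth h0 h1 hconn hint
  -- Eve maximises in the first auxiliary game and minimises in the second one.
  obtain ⟨val, f, hfE, hval, hmax, hmin⟩ := G.exists_value h0 h1 G.Eve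
  obtain ⟨val', f', hfE', hval', hmax', hmin'⟩ := G.exists_value h0 h1 G.Eveᶜ
  have : Finite {l : List V // l.length ≤ N + 1} := (List.finite_length_le V (N + 1)).to_subtype
  refine ⟨{l : List V // l.length ≤ N + 1}, Fintype.ofFinite _, ⟨[], by simp⟩, recordUpTo N,
    fun l v => if l.1.length ≤ N then σ (l.1 ++ [v])
      else if G.UpAfter lam I N l.1 then f v else f' v, ?_, ?_⟩
  · intro l v hv
    dsimp only
    split_ifs
    · exact hσ _ _ hv
    · exact hfE v
    · exact hfE' v
  intro π hπ hcons
  have hearly : ∀ i < N + 1, π i ∈ G.Eve → π (i + 1) = σ (prefixList π i) := by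
    intro i hi hv
    obtain ⟨e1, e2⟩ := memRun_recordUpTo_le N π i (by omega)
    rw [hcons i hv]
    beta_reduce
    rw [if_pos (by omega), e2]
  have hlate : ∀ i, N + 1 ≤ i → π i ∈ G.Eve →
      π (i + 1) = if G.UpAfter lam I N (prefixList π N) then f (π i) else f' (π i) := by
    intro i hi hv
    rw [hcons i hv]
    beta_reduce
    rw [memRun_recordUpTo_ge N π i hi, if_neg (by rw [length_prefixList]; omega)]
  by_cases hup : G.UpAfter lam I N (prefixList π N)
  · obtain ⟨ρ, hρ, hρσ, hag, hρf⟩ := G.exists_deviation hσ hfE hπ hearly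
    refine hup π ρ rfl (prefixList_congr fun i hi => (hag i (by omega)).symm) (hwin ρ hρ hρσ) ?_
    exact G.DS_le_DS_of_optimal h0 h1 hval hmax hmin hπ.2 hρ.2 hag
      (fun i hi hv => by rw [hlate i hi hv, if_pos hup]) hρf
  · have hdown := (hN (prefixList π N)).resolve_left hup
    obtain ⟨ρ, hρ, hρσ, hag, hρf⟩ := G.exists_deviation hσ hfE' hπ hearly
    refine hdown π ρ rfl (prefixList_congr fun i hi => (hag i (by omega)).symm) (hwin ρ hρ hρσ) ?_
    -- Here Adam is the maximiser, so the two plays exchange their roles.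
    exact G.DS_le_DS_of_optimal h0 h1 hval' hmax' hmin' hρ.2 hπ.2 (fun i hi => (hag i hi).symm)
      hρf (fun i hi hv => by rw [hlate i hi (not_not.1 hv), if_neg hup])
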